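/- arXiv:0710.0394 — 2 statements merged into one kernel-verified Lean document; each statement's English description precedes it below -/
import Mathlib

section
/- Let R be a principal ideal domain with field of fractions K, and let A, B be finitely generated R-modules. Then Ext¹_R(A, B) is isomorphic to Hom_R(T(A), K/R) ⊗_R B, where T(A) is the torsion submodule of A. -/
open CategoryTheory Opposite TensorProduct

/-- The first Ext group `Ext¹_R(A, B)` of `R`-modules, as an `R`-module. -/
noncomputable abbrev ext1 (R : Type) [CommRing R] (A B : Type) [AddCommGroup A]
    [Module R A] [AddCommGroup B] [Module R B] : ModuleCat R :=
  ((Ext R (ModuleCat R) 1).obj (op (ModuleCat.of R A))).obj (ModuleCat.of R B)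

theorem hat_cyclic (R : Type) [CommRing R] [IsDomain R] (a : R) (ha : a ≠ 0) :
    Nonempty (((R ⧸ Submodule.span R {a}) →ₗ[R]
      (FractionRing R ⧸ LinearMap.range (Algebra.linearMap R (FractionRing R)))) ≃ₗ[R]
      (R ⧸ Submodule.span R {a})) := by
  have ha' : algebraMap R (FractionRing R) a ≠ 0 := by
    simpa using ha
  let N := LinearMap.range (Algebra.linearMap R (FractionRing R))
  have h0 : LinearMap.toSpanSingleton R (FractionRing R ⧸ N)
      (N.mkQ (algebraMap R (FractionRing R) a)⁻¹) a = 0 := by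
    rw [LinearMap.toSpanSingleton_apply, ← map_smul, Submodule.mkQ_apply,
      Submodule.Quotient.mk_eq_zero]
    refine ⟨1, ?_⟩
    rw [Algebra.linearMap_apply, map_one, Algebra.smul_def, mul_inv_cancel₀ ha']
  let ψ : (R ⧸ Submodule.span R {a}) →ₗ[R] (FractionRing R ⧸ N) :=
    Submodule.liftQSpanSingleton a _ h0
  have hψ : ∀ x : R, ψ (Submodule.Quotient.mk x) =
      N.mkQ (algebraMap R (FractionRing R) x * (algebraMap R (FractionRing R) a)⁻¹) := by
    intro x
    change x • N.mkQ _ = _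
    rw [← map_smul, Algebra.smul_def]
  let Θ := LinearMap.toSpanSingleton R _ ψ
  have hs : Function.Surjective Θ := by
    intro φ
    obtain ⟨k, hk⟩ := N.mkQ_surjective (φ (Submodule.Quotient.mk 1))
    have h1 : a • k ∈ N := by
      rw [← Submodule.Quotient.mk_eq_zero, ← Submodule.mkQ_apply, map_smul, hk, ← map_smul,
        ← Submodule.Quotient.mk_smul, (Submodule.Quotient.mk_eq_zero _).2, map_zero]
      simpa using Submodule.mem_span_singleton_self a
    obtain ⟨r, hr⟩ := h1
    refine ⟨r, ?_⟩
    apply Submodule.linearMap_qext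
    apply LinearMap.ext_ring
    change r • ψ (Submodule.Quotient.mk 1) = φ (Submodule.Quotient.mk 1)
    rw [hψ, ← hk, ← map_smul, map_one, one_mul, Algebra.smul_def]
    rw [Algebra.linearMap_apply, Algebra.smul_def] at hr
    rw [hr]
    congr 1
    field_simp
  have hker : LinearMap.ker Θ = Submodule.span R {a} := by
    ext r
    rw [LinearMap.mem_ker, Submodule.mem_span_singleton]
    have e : Θ r = 0 ↔ N.mkQ (algebraMap R (FractionRing R) r *
        (algebraMap R (FractionRing R) a)⁻¹) = 0 := by
      rw [← hψ]
      constructor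
      · intro h
        have := LinearMap.congr_fun h (Submodule.Quotient.mk 1)
        change r • ψ (Submodule.Quotient.mk 1) = 0 at this
        rw [← map_smul, ← Submodule.Quotient.mk_smul] at this
        simpa using this
      · intro h
        apply Submodule.linearMap_qext
        apply LinearMap.ext_ring
        change r • ψ (Submodule.Quotient.mk 1) = 0
        rw [← map_smul, ← Submodule.Quotient.mk_smul]
        simpa using h
    rw [e, Submodule.mkQ_apply, Submodule.Quotient.mk_eq_zero]
    constructor
    · rintro ⟨s, hs⟩
      refine ⟨s, ?_⟩
      apply FaithfulSMul.algebraMap_injective R (FractionRing R)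
      rw [smul_eq_mul, map_mul, show algebraMap R (FractionRing R) s = _ from hs, inv_mul_cancel_right₀ ha']
    · rintro ⟨s, rfl⟩
      refine ⟨s, ?_⟩
      rw [smul_eq_mul, map_mul, mul_inv_cancel_right₀ ha', Algebra.linearMap_apply]
  exact ⟨((Submodule.quotEquivOfEq _ _ hker.symm).trans
    (Θ.quotKerEquivOfSurjective hs)).symm⟩

theorem coker_equiv (R : Type) [CommRing R] (ι F B : Type) [Fintype ι]
    [AddCommGroup F] [Module R F] [AddCommGroup B] [Module R B] (a : ι → R)
    (f : (ι → R) →ₗ[R] F × (ι → R)) (hf : ∀ y, f y = (0, a * y)) :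
    Nonempty ((((ι → R) →ₗ[R] B) ⧸ LinearMap.range (LinearMap.lcomp R B f)) ≃ₗ[R]
      ((∀ i, R ⧸ Submodule.span R {a i}) ⊗[R] B)) := by
  classical
  let Q : ι → Submodule R B := fun i => (Submodule.span R {a i} : Ideal R) • (⊤ : Submodule R B)
  let Θ : ((ι → R) →ₗ[R] B) →ₗ[R] (∀ i, B ⧸ Q i) :=
    LinearMap.pi fun i => (Q i).mkQ ∘ₗ LinearMap.applyₗ (Pi.single i (1 : R))
  have hs : Function.Surjective Θ := by
    intro b
    choose c hc using fun i => (Q i).mkQ_surjective (b i)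
    refine ⟨(Pi.basisFun R ι).constr R c, ?_⟩
    ext i
    change (Q i).mkQ ((Pi.basisFun R ι).constr R c (Pi.single i 1)) = _
    rw [← Pi.basisFun_apply, Module.Basis.constr_basis, hc]
  have hker : LinearMap.ker Θ = LinearMap.range (LinearMap.lcomp R B f) := by
    ext φ
    have e : φ ∈ LinearMap.ker Θ ↔ ∀ i, φ (Pi.single i 1) ∈ Q i := by
      rw [LinearMap.mem_ker, funext_iff]
      refine forall_congr' fun i => ?_
      change (Q i).mkQ _ = 0 ↔ _
      rw [Submodule.mkQ_apply, Submodule.Quotient.mk_eq_zero]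
      rfl
    have hQ : ∀ i b, b ∈ Q i ↔ ∃ c, a i • c = b := by
      intro i b
      change b ∈ (Ideal.span {a i}) • (⊤ : Submodule R B) ↔ _
      rw [Submodule.ideal_span_singleton_smul, Submodule.mem_smul_pointwise_iff_exists]
      simp
    rw [e]
    simp only [hQ]
    constructor
    · intro h
      choose c hc using h
      refine ⟨(Pi.basisFun R ι).constr R c ∘ₗ LinearMap.snd R F (ι → R), ?_⟩
      apply (Pi.basisFun R ι).ext
      intro i
      have h2 : a * Pi.single i (1 : R) = a i • Pi.basisFun R ι i := by
        ext j
        by_cases hj : j = i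
        · subst hj; simp
        · simp [hj]
      rw [LinearMap.lcomp_apply, hf, Pi.basisFun_apply, LinearMap.comp_apply,
        LinearMap.snd_apply, h2, map_smul, Module.Basis.constr_basis, hc]
    · rintro ⟨χ, rfl⟩ i
      refine ⟨χ (0, Pi.single i 1), ?_⟩
      rw [LinearMap.lcomp_apply, hf, ← map_smul]
      congr 1
      ext j
      · simp
      · by_cases hj : j = i
        · subst hj; simp
        · simp [hj]
  exact ⟨((Submodule.quotEquivOfEq _ _ hker.symm).trans
    (Θ.quotKerEquivOfSurjective hs)).trans
    ((TensorProduct.piLeft R B (fun i => R ⧸ Submodule.span R {a i})).trans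
      (LinearEquiv.piCongrRight fun i =>
        TensorProduct.quotTensorEquivQuotSMul B (Submodule.span R {a i}))).symm⟩

section resolution

variable {R : Type} [CommRing R] {P₁ P₀ : ModuleCat.{0} R}

/-- Objects of the two-term complex. -/
def twoX (P₁ P₀ : ModuleCat.{0} R) : ℕ → ModuleCat.{0} R
  | 0 => P₀
  | 1 => P₁
  | _ + 2 => ModuleCat.of R PUnit

/-- Differentials of the two-term complex. -/
def twoD (f : P₁ ⟶ P₀) : ∀ n, twoX P₁ P₀ (n + 1) ⟶ twoX P₁ P₀ n
  | 0 => f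
  | _ + 1 => 0

theorem twoD_sq (f : P₁ ⟶ P₀) (n : ℕ) : twoD f (n + 1) ≫ twoD f n = 0 := by
  cases n <;> exact Limits.zero_comp

/-- The two-term complex. -/
noncomputable def twoC (f : P₁ ⟶ P₀) : ChainComplex (ModuleCat.{0} R) ℕ :=
  ChainComplex.of (twoX P₁ P₀) (twoD f) (twoD_sq f)

theorem twoC_d10 (f : P₁ ⟶ P₀) : (twoC f).d 1 0 = f :=
  ChainComplex.of_d (twoX P₁ P₀) (twoD f) 0

theorem twoC_d21 (f : P₁ ⟶ P₀) (n : ℕ) : (twoC f).d (n + 2) (n + 1) = 0 :=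
  ChainComplex.of_d (twoX P₁ P₀) (twoD f) (n + 1)

theorem twoC_isZero (f : P₁ ⟶ P₀) (n : ℕ) : Limits.IsZero ((twoC f).X (n + 2)) :=
  ModuleCat.isZero_of_subsingleton (ModuleCat.of R PUnit)

theorem twoC_exact (f : P₁ ⟶ P₀) (hf : Function.Injective f.hom) (n : ℕ) :
    (twoC f).ExactAt (n + 1) := by
  rw [HomologicalComplex.exactAt_iff' _ (n + 1 + 1) (n + 1) n (by simp) (by simp)]
  cases n with
  | zero =>
    have : Mono ((twoC f).sc' 2 1 0).g := by
      change Mono ((twoC f).d 1 0)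
      rw [twoC_d10]
      exact (ModuleCat.mono_iff_injective f).2 hf
    exact (ShortComplex.exact_iff_mono _ (twoC_d21 f 0)).2 this
  | succ n => exact ShortComplex.exact_of_isZero_X₂ _ (twoC_isZero f n)

theorem two_exact {A : ModuleCat.{0} R} (f : P₁ ⟶ P₀) (g : P₀ ⟶ A) (w : f ≫ g = 0)
    (h : (ShortComplex.mk f g w).Exact) (d : P₁ ⟶ P₀) (hd : d = f) (w' : d ≫ g = 0) :
    (ShortComplex.mk d g w').Exact := by
  subst hd
  exact h

/-- The two-term resolution. -/
noncomputable def twoRes {A : ModuleCat.{0} R} (f : P₁ ⟶ P₀) (g : P₀ ⟶ A) (w : f ≫ g = 0)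
    [Projective P₁] [Projective P₀] [hg : Epi g] (hf : Function.Injective f.hom)
    (h : (ShortComplex.mk f g w).Exact) : ProjectiveResolution A where
  complex := twoC f
  projective n := match n with
    | 0 => (inferInstance : Projective P₀)
    | 1 => (inferInstance : Projective P₁)
    | n + 2 => (twoC_isZero f n).projective
  π := (ChainComplex.toSingle₀Equiv (twoC f) A).symm ⟨g, by rw [twoC_d10]; exact w⟩
  quasiIso := ⟨fun n => by
    cases n
    · rw [ChainComplex.quasiIsoAt₀_iff, ShortComplex.quasiIso_iff_of_zeros']
      · have e := ChainComplex.toSingle₀Equiv_symm_apply_f_zero (C := twoC f) (X := A) g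
          (by rw [twoC_d10]; exact w)
        refine ⟨?_, ?_⟩
        · have := two_exact f g w h ((twoC f).d 1 0) (twoC_d10 f) (by rw [twoC_d10]; exact w)
          refine (ShortComplex.exact_iff_of_iso ?_).2 this
          exact ShortComplex.isoMk (Iso.refl _) (Iso.refl _) (Iso.refl _)
            ((Category.id_comp _).trans (Category.comp_id _).symm)
            ((Category.id_comp _).trans (e.symm.trans (Category.comp_id _).symm))
        · have : Epi (((ChainComplex.toSingle₀Equiv (twoC f) A).symm
            ⟨g, by rw [twoC_d10]; exact w⟩).f 0) := by rw [e]; exact hg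
          exact this
      · exact (twoC f).shape 0 0 (by simp)
      all_goals rfl
    · rw [quasiIsoAt_iff_exactAt']
      · apply twoC_exact f hf
      · apply ChainComplex.exactAt_succ_single_obj⟩

theorem homology_of_g_zero (S : ShortComplex (ModuleCat.{0} R)) (hg : S.g = 0) :
    Nonempty (S.homology ≅ ModuleCat.of R (S.X₂ ⧸ LinearMap.range S.f.hom)) :=
  ⟨(ShortComplex.LeftHomologyData.ofIsColimitCokernelCofork S hg _
    (ModuleCat.cokernelIsColimit S.f)).homologyIso⟩

end resolution

theorem ext1_equiv (R : Type) [CommRing R] (A B P₁ P₀ : Type) [AddCommGroup A]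
    [Module R A] [AddCommGroup B] [Module R B] [AddCommGroup P₁] [Module R P₁]
    [AddCommGroup P₀] [Module R P₀] [Module.Projective R P₁] [Module.Projective R P₀]
    (f : P₁ →ₗ[R] P₀) (g : P₀ →ₗ[R] A) (hf : Function.Injective f)
    (hg : Function.Surjective g) (h : Function.Exact f g) :
    Nonempty ((ext1 R A B) ≃ₗ[R] ((P₁ →ₗ[R] B) ⧸ LinearMap.range (LinearMap.lcomp R B f))) := by
  let f' := ModuleCat.ofHom f
  let g' := ModuleCat.ofHom g
  have w : f' ≫ g' = 0 := by
    ext x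
    exact h.apply_apply_eq_zero x
  have : Epi g' := (ModuleCat.epi_iff_surjective _).2 hg
  have : Projective (ModuleCat.of R P₁) := (IsProjective.iff_projective (R := R) P₁).1 inferInstance
  have : Projective (ModuleCat.of R P₀) := (IsProjective.iff_projective (R := R) P₀).1 inferInstance
  have hex : (ShortComplex.mk f' g' w).Exact :=
    (ShortComplex.ShortExact.moduleCat_exact_iff_function_exact _).2 h
  let P := twoRes f' g' w hf hex
  let C := P.complex.linearYonedaObj R (ModuleCat.of R B)
  have i1 : ext1 R A B ≅ C.homology 1 := P.isoExt 1 (ModuleCat.of R B)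
  have i2 : C.homology 1 ≅ (C.sc' 0 1 2).homology :=
    ShortComplex.homologyMapIso (C.isoSc' 0 1 2 (by simp) (by simp))
  have hz : (C.sc' 0 1 2).g = 0 := by
    ext (x : _ ⟶ _)
    exact (twoC_isZero f' 0).eq_of_src _ _
  obtain ⟨i3⟩ := homology_of_g_zero (C.sc' 0 1 2) hz
  let e : (C.sc' 0 1 2).X₂ ≃ₗ[R] (P₁ →ₗ[R] B) :=
    (ModuleCat.homLinearEquiv (S := R) : (ModuleCat.of R P₁ ⟶ ModuleCat.of R B) ≃ₗ[R] _)
  refine ⟨(i1 ≪≫ i2 ≪≫ i3).toLinearEquiv.trans (Submodule.Quotient.equiv _ _ e ?_)⟩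
  have hd : ∀ x : ModuleCat.of R P₀ ⟶ ModuleCat.of R B,
      e ((C.sc' 0 1 2).f.hom x) = LinearMap.lcomp R B f x.hom := by
    intro x
    change ((twoC f').d 1 0 ≫ x).hom = _
    rw [twoC_d10]
    rfl
  ext φ
  constructor
  · rintro ⟨_, ⟨x, rfl⟩, rfl⟩
    exact ⟨ModuleCat.Hom.hom (x : ModuleCat.of R P₀ ⟶ ModuleCat.of R B), (hd x).symm⟩
  · rintro ⟨x, rfl⟩
    exact ⟨_, ⟨ModuleCat.ofHom x, rfl⟩, hd _⟩

/-- Let `R` be a PID with field of fractions `K`, and `A`, `B` finitely generated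
`R`-modules.  Then `Ext¹_R(A, B) ≅ Hom_R(T(A), K/R) ⊗_R B`, where `T(A)` is the
torsion submodule of `A`. -/
theorem ext_iso_hat_tensor (R : Type) [CommRing R] [IsDomain R]
    [IsPrincipalIdealRing R] (A B : Type) [AddCommGroup A] [Module R A]
    [AddCommGroup B] [Module R B] [Module.Finite R A] [Module.Finite R B] :
    Nonempty ((ext1 R A B) ≃ₗ[R]
      ((Submodule.torsion R A →ₗ[R]
          (FractionRing R ⧸ LinearMap.range (Algebra.linearMap R (FractionRing R))))
        ⊗[R] B)) := by
  classical
  obtain ⟨ι, _, p, hp, k, ⟨e₀⟩⟩ :=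
    Module.equiv_directSum_of_isTorsion (Submodule.torsion_isTorsion (R := R) (M := A))
  let a : ι → R := fun i => p i ^ k i
  have ha : ∀ i, a i ≠ 0 := fun i => pow_ne_zero _ (hp i).ne_zero
  let e : Submodule.torsion R A ≃ₗ[R] (∀ i, R ⧸ Submodule.span R {a i}) :=
    e₀.trans (DirectSum.linearEquivFunOnFintype R ι (fun i => R ⧸ Submodule.span R {a i}))
  obtain ⟨s, hs⟩ := Module.projective_lifting_property _ LinearMap.id
    (Submodule.torsion R A).mkQ_surjective
  have hs' : ∀ x, (Submodule.torsion R A).mkQ (s x) = x := fun x => LinearMap.congr_fun hs x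
  have hT : ∀ t : Submodule.torsion R A, (Submodule.torsion R A).mkQ (t : A) = 0 := fun t =>
    (Submodule.Quotient.mk_eq_zero _).2 t.2
  let F := A ⧸ Submodule.torsion R A
  let q : (ι → R) →ₗ[R] (∀ i, R ⧸ Submodule.span R {a i}) :=
    LinearMap.pi fun i => (Submodule.span R {a i}).mkQ ∘ₗ LinearMap.proj i
  have hq : Function.Surjective q := by
    intro b
    choose c hc using fun i => (Submodule.span R {a i}).mkQ_surjective (b i)
    exact ⟨c, funext hc⟩
  have hq0 : ∀ y, q y = 0 ↔ ∃ z, a * z = y := by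
    intro y
    have h1 : q y = 0 ↔ ∀ i, ∃ c : R, c • a i = y i := by
      rw [funext_iff]
      refine forall_congr' fun i => ?_
      change (Submodule.span R {a i}).mkQ (y i) = 0 ↔ _
      rw [Submodule.mkQ_apply, Submodule.Quotient.mk_eq_zero, Submodule.mem_span_singleton]
    rw [h1]
    constructor
    · intro h
      choose c hc using h
      exact ⟨c, funext fun i => by rw [← hc, Pi.mul_apply, smul_eq_mul, mul_comm]⟩
    · rintro ⟨z, rfl⟩ i
      exact ⟨z i, by rw [Pi.mul_apply, smul_eq_mul, mul_comm]⟩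
  let f : (ι → R) →ₗ[R] F × (ι → R) := LinearMap.inr R F (ι → R) ∘ₗ LinearMap.mulLeft R a
  have hf : ∀ y, f y = (0, a * y) := fun y => rfl
  let g : F × (ι → R) →ₗ[R] A := LinearMap.coprod s
    ((Submodule.torsion R A).subtype ∘ₗ e.symm.toLinearMap ∘ₗ q)
  have hg : ∀ x y, g (x, y) = s x + (e.symm (q y) : A) := fun x y => rfl
  have hfi : Function.Injective f := by
    intro y z hyz
    rw [hf, hf] at hyz
    funext i
    exact mul_left_cancel₀ (ha i) (congrFun (Prod.mk.inj hyz).2 i)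
  have hgs : Function.Surjective g := by
    intro x
    let x' : F := (Submodule.torsion R A).mkQ x
    have hx : x - s x' ∈ Submodule.torsion R A := by
      rw [← Submodule.Quotient.mk_eq_zero, ← Submodule.mkQ_apply, map_sub, hs', sub_self]
    obtain ⟨y, hy⟩ := hq (e ⟨_, hx⟩)
    refine ⟨(x', y), ?_⟩
    rw [hg, hy, LinearEquiv.symm_apply_apply, add_sub_cancel]
  have hex : Function.Exact f g := by
    rintro ⟨x, y⟩
    rw [hg]
    constructor
    · intro h
      have hx : x = 0 := by
        have := congrArg (Submodule.torsion R A).mkQ h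
        rwa [map_add, hs', hT, add_zero, map_zero] at this
      subst hx
      rw [map_zero, zero_add, Submodule.coe_eq_zero, LinearEquiv.map_eq_zero_iff, hq0] at h
      obtain ⟨z, rfl⟩ := h
      exact ⟨z, hf z⟩
    · rintro ⟨z, hz⟩
      rw [hf] at hz
      obtain ⟨rfl, h2⟩ := Prod.mk.inj hz
      rw [(hq0 y).2 ⟨z, h2⟩]
      simp
  obtain ⟨i1⟩ := ext1_equiv R A B (ι → R) (F × (ι → R)) f g hfi hgs hex
  obtain ⟨i2⟩ := coker_equiv R ι F B a f hf
  let L := FractionRing R ⧸ LinearMap.range (Algebra.linearMap R (FractionRing R))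
  let i3 : (Submodule.torsion R A →ₗ[R] L) ≃ₗ[R] (∀ i, R ⧸ Submodule.span R {a i}) :=
    (LinearEquiv.congrLeft L R e).trans
      ((LinearMap.lsum R (fun i => R ⧸ Submodule.span R {a i}) R).symm.trans
        (LinearEquiv.piCongrRight fun i => (hat_cyclic R (a i) (ha i)).some))
  exact ⟨(i1.trans i2).trans (TensorProduct.congr i3.symm (LinearEquiv.refl R B))⟩
end

section
/- Let A and B be finite abelian p-groups regarded as abelian Lie rings over ℤ_p. The set of equivalence classes of central extensions 0 → B → E → A → 0 of ℤ_p-Lie rings (where the image of B is central in E) is in bijection with Hom(⋀²A, B) × Ext¹_{ℤ_p}(A, B). -/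
open CategoryTheory Opposite

/-- A central extension `0 → B → E → A → 0` of Lie rings over `R`, where `A` and `B`
are `R`-modules regarded as abelian Lie rings: `E` is a Lie ring and Lie `R`-algebra,
`ι` is injective, `π` is surjective, the sequence is exact, the image of `B` is
central in `E`, and `π` is a Lie homomorphism onto the abelian Lie ring `A`. -/
structure LieCentralExtension (R : Type) [CommRing R] (A B : Type) [AddCommGroup A]
    [Module R A] [AddCommGroup B] [Module R B] where
  E : Type
  [lieRing : LieRing E]
  [lieAlgebra : LieAlgebra R E]
  ι : B →ₗ[R] E
  π : E →ₗ[R] A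
  inj : Function.Injective ι
  surj : Function.Surjective π
  exact : LinearMap.range ι = LinearMap.ker π
  central : ∀ (e : E) (b : B), ⁅e, ι b⁆ = 0
  π_bracket : ∀ e e' : E, π ⁅e, e'⁆ = 0

attribute [instance] LieCentralExtension.lieRing LieCentralExtension.lieAlgebra

/-- Two central extensions are equivalent if there is an isomorphism of Lie rings
between the middle terms commuting with the maps from `B` and to `A`. -/
def LieCentralExtension.Equivalent {R : Type} [CommRing R] {A B : Type}
    [AddCommGroup A] [Module R A] [AddCommGroup B] [Module R B]
    (X X' : LieCentralExtension R A B) : Prop :=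
  ∃ f : X.E ≃ₗ[R] X'.E, (∀ e e' : X.E, f ⁅e, e'⁆ = ⁅f e, f e'⁆) ∧
    (∀ b : B, f (X.ι b) = X'.ι b) ∧ (∀ e : X.E, X'.π (f e) = X.π e)

namespace CentralExt

section Abstract

variable {R : Type} [CommRing R] {A B : Type} [AddCommGroup A] [Module R A]
  [AddCommGroup B] [Module R B]

theorem alt_add_left (w : A [⋀^Fin 2]→ₗ[R] B) (a a' b : A) :
    w ![a + a', b] = w ![a, b] + w ![a', b] := w.map_vecCons_add _ _ _

theorem alt_smul_left (w : A [⋀^Fin 2]→ₗ[R] B) (r : R) (a b : A) :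
    w ![r • a, b] = r • w ![a, b] := w.map_vecCons_smul _ _ _

theorem alt_swap (w : A [⋀^Fin 2]→ₗ[R] B) (a b : A) :
    w ![a, b] = - w ![b, a] := by
  have h := w.map_swap ![b, a] (i := 0) (j := 1) (by decide)
  rw [← h]
  congr 1
  ext i
  fin_cases i <;> simp

theorem alt_add_right (w : A [⋀^Fin 2]→ₗ[R] B) (a b b' : A) :
    w ![a, b + b'] = w ![a, b] + w ![a, b'] := by
  rw [alt_swap, alt_add_left, alt_swap w a b, alt_swap w a b', neg_add]

theorem alt_smul_right (w : A [⋀^Fin 2]→ₗ[R] B) (r : R) (a b : A) :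
    w ![a, r • b] = r • w ![a, b] := by
  rw [alt_swap, alt_smul_left, alt_swap w a b, smul_neg]

theorem alt_self (w : A [⋀^Fin 2]→ₗ[R] B) (a : A) : w ![a, a] = 0 :=
  w.map_eq_zero_of_eq _ (i := 0) (j := 1) (by simp) (by decide)

theorem alt_zero_right (w : A [⋀^Fin 2]→ₗ[R] B) (a : A) : w ![a, 0] = 0 := by
  simpa using alt_smul_right w 0 a 0

theorem alt_zero_left (w : A [⋀^Fin 2]→ₗ[R] B) (a : A) : w ![0, a] = 0 := by
  simpa using alt_smul_left w 0 0 a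

/-- An alternating map from a bilinear function. -/
def mkAlt (w : A → A → B) (h1 : ∀ a a' b, w (a + a') b = w a b + w a' b)
    (h2 : ∀ (r : R) a b, w (r • a) b = r • w a b)
    (h3 : ∀ a b b', w a (b + b') = w a b + w a b')
    (h4 : ∀ (r : R) a b, w a (r • b) = r • w a b)
    (h5 : ∀ a, w a a = 0) : A [⋀^Fin 2]→ₗ[R] B where
  toFun v := w (v 0) (v 1)
  map_update_add' := by
    intro inst v i x y
    rw [Subsingleton.elim inst (instDecidableEqFin 2)]
    fin_cases i <;> simp [h1, h3]
  map_update_smul' := by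
    intro inst v i x y
    rw [Subsingleton.elim inst (instDecidableEqFin 2)]
    fin_cases i <;> simp [h2, h4]
  map_eq_zero_of_eq' := by
    intro v i j h hij
    fin_cases i <;> fin_cases j <;> simp_all

theorem alt_ext {w w' : A [⋀^Fin 2]→ₗ[R] B} (h : ∀ a b, w ![a, b] = w' ![a, b]) : w = w' := by
  ext v
  have hv : v = ![v 0, v 1] := by ext i; fin_cases i <;> rfl
  rw [hv]; exact h _ _

/-- A Lie central extension from a module extension and an alternating form. -/
def mkLie {E : Type} [AddCommGroup E] [Module R E] (ι : B →ₗ[R] E) (π : E →ₗ[R] A)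
    (inj : Function.Injective ι) (surj : Function.Surjective π)
    (exact : LinearMap.range ι = LinearMap.ker π) (w : A [⋀^Fin 2]→ₗ[R] B) :
    LieCentralExtension R A B :=
  have hπ : ∀ b, π (ι b) = 0 := fun b => by
    have : ι b ∈ LinearMap.ker π := exact ▸ LinearMap.mem_range_self ι b
    exact this
  letI i1 : LieRing E :=
    { (inferInstance : AddCommGroup E) with
      bracket := fun e e' => ι (w ![π e, π e'])
      add_lie := fun x y z => by simp only [map_add, alt_add_left]
      lie_add := fun x y z => by simp only [map_add, alt_add_right]
      lie_self := fun x => by simp only [alt_self, map_zero]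
      leibniz_lie := fun x y z => by simp only [hπ, alt_zero_left, alt_zero_right, map_zero, add_zero] }
  letI i2 : LieAlgebra R E :=
    { (inferInstance : Module R E) with
      lie_smul := fun r x y => by
        change ι (w ![π x, π (r • y)]) = r • ι (w ![π x, π y])
        rw [map_smul, alt_smul_right, map_smul] }
  { E := E
    ι := ι
    π := π
    inj := inj
    surj := surj
    exact := exact
    central := fun e b => by
      change ι (w ![π e, π (ι b)]) = 0
      rw [hπ, alt_zero_right, map_zero]
    π_bracket := fun e e' => hπ _ }

theorem pi_iota (X : LieCentralExtension R A B) (b : B) : X.π (X.ι b) = 0 := by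
  have : X.ι b ∈ LinearMap.ker X.π := X.exact ▸ LinearMap.mem_range_self X.ι b
  exact this

theorem exists_of_pi (X : LieCentralExtension R A B) {e : X.E} (he : X.π e = 0) :
    ∃ b, X.ι b = e := by
  have : e ∈ LinearMap.range X.ι := X.exact ▸ he
  exact this

theorem factor (X : LieCentralExtension R A B) {M : Type} [AddCommGroup M] [Module R M]
    (g : M →ₗ[R] X.E) (hg : ∀ m, X.π (g m) = 0) : ∃ h : M →ₗ[R] B, ∀ m, X.ι (h m) = g m := by
  choose h hh using fun m => exists_of_pi X (hg m)
  refine ⟨⟨⟨h, fun x y => X.inj ?_⟩, fun r x => X.inj ?_⟩, hh⟩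
  · simp only [hh, map_add]
  · simp only [hh, map_smul, RingHom.id_apply]

theorem central' (X : LieCentralExtension R A B) (e : X.E) (b : B) : ⁅X.ι b, e⁆ = 0 := by
  rw [← lie_skew, X.central, neg_zero]

theorem exists_form (X : LieCentralExtension R A B) :
    ∃ w : A [⋀^Fin 2]→ₗ[R] B, ∀ e e' : X.E, ⁅e, e'⁆ = X.ι (w ![X.π e, X.π e']) := by
  choose s hs using X.surj
  choose c hc using fun e e' : X.E => exists_of_pi X (X.π_bracket e e')
  have key : ∀ e1 e2 e1' e2' : X.E, X.π e1 = X.π e2 → X.π e1' = X.π e2' →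
      ⁅e1, e1'⁆ = ⁅e2, e2'⁆ := by
    intro e1 e2 e1' e2' h h'
    obtain ⟨b, hb⟩ := exists_of_pi X (e := e1 - e2) (by rw [map_sub, h, sub_self])
    obtain ⟨b', hb'⟩ := exists_of_pi X (e := e1' - e2') (by rw [map_sub, h', sub_self])
    rw [eq_sub_iff_add_eq] at hb hb'
    rw [← hb, ← hb']
    simp only [add_lie, lie_add, X.central, central' X, zero_add]
  refine ⟨mkAlt (fun a a' => c (s a) (s a')) ?_ ?_ ?_ ?_ ?_, ?_⟩
  · intro a a' b
    apply X.inj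
    simp only [map_add, hc, ← add_lie]
    exact key _ _ _ _ (by simp only [hs, map_add]) rfl
  · intro r a b
    apply X.inj
    simp only [map_smul, hc, ← smul_lie]
    exact key _ _ _ _ (by simp only [hs, map_smul]) rfl
  · intro a b b'
    apply X.inj
    simp only [map_add, hc, ← lie_add]
    exact key _ _ _ _ rfl (by simp only [hs, map_add])
  · intro r a b
    apply X.inj
    simp only [map_smul, hc, ← lie_smul]
    exact key _ _ _ _ rfl (by simp only [hs, map_smul])
  · intro a
    apply X.inj
    simp only [hc, lie_self, map_zero]
  · intro e e'
    change _ = X.ι (c (s (X.π e)) (s (X.π e')))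
    rw [hc]
    exact key _ _ _ _ (hs _).symm (hs _).symm

theorem equivalent_of_map (X X' : LieCentralExtension R A B) (φ : X.E →ₗ[R] X'.E)
    (h1 : ∀ e e' : X.E, φ ⁅e, e'⁆ = ⁅φ e, φ e'⁆)
    (h2 : ∀ b : B, φ (X.ι b) = X'.ι b) (h3 : ∀ e : X.E, X'.π (φ e) = X.π e) :
    X.Equivalent X' := by
  refine ⟨LinearEquiv.ofBijective φ ⟨?_, ?_⟩, h1, h2, h3⟩
  · rw [injective_iff_map_eq_zero]
    intro e he
    obtain ⟨b, rfl⟩ := exists_of_pi X (e := e) (by rw [← h3, he, map_zero])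
    rw [h2] at he
    rw [X'.inj (he.trans (map_zero X'.ι).symm), map_zero]
  · intro e'
    obtain ⟨e, he⟩ := X.surj (X'.π e')
    obtain ⟨b, hb⟩ := exists_of_pi X' (e := e' - φ e) (by rw [map_sub, h3, he, sub_self])
    refine ⟨X.ι b + e, ?_⟩
    rw [map_add, h2, hb, sub_add_cancel]

theorem equivalence : Equivalence (LieCentralExtension.Equivalent (R := R) (A := A) (B := B)) where
  refl X := ⟨LinearEquiv.refl R _, fun _ _ => rfl, fun _ => rfl, fun _ => rfl⟩
  symm := by
    rintro X Y ⟨f, h1, h2, h3⟩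
    refine ⟨f.symm, fun e e' => ?_, fun b => ?_, fun e => ?_⟩
    · apply f.injective; simp [h1]
    · apply f.injective; simp [h2]
    · rw [← h3]; simp
  trans := by
    rintro X Y Z ⟨f, h1, h2, h3⟩ ⟨g, k1, k2, k3⟩
    exact ⟨f.trans g, fun e e' => by simp [h1, k1], fun b => by simp [h2, k2],
      fun e => by simp [h3, k3]⟩

variable {P0 P1 P2 : Type} [AddCommGroup P0] [Module R P0] [AddCommGroup P1] [Module R P1]
  [AddCommGroup P2] [Module R P2] (d2 : P2 →ₗ[R] P1) (d1 : P1 →ₗ[R] P0) (q : P0 →ₗ[R] A)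

/-- The relations defining the pushout. -/
def rel (f : P1 →ₗ[R] B) : Submodule R (B × P0) := LinearMap.range (f.prod (-d1))

theorem mem_rel (f : P1 →ₗ[R] B) (b : B) (x : P0) :
    (b, x) ∈ rel d1 f ↔ ∃ y, f y = b ∧ - d1 y = x := by
  simp [rel, LinearMap.mem_range]

/-- The inclusion of `B` in the pushout. -/
def iotaMap (f : P1 →ₗ[R] B) : B →ₗ[R] ((B × P0) ⧸ rel d1 f) :=
  (rel d1 f).mkQ ∘ₗ LinearMap.inl R B P0

/-- The projection from the pushout. -/
def piMap (h10 : ∀ y, q (d1 y) = 0) (f : P1 →ₗ[R] B) : ((B × P0) ⧸ rel d1 f) →ₗ[R] A :=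
  (rel d1 f).liftQ (q ∘ₗ LinearMap.snd R B P0) (by
    rintro _ ⟨y, rfl⟩
    simp [h10])

theorem mk_d (f : P1 →ₗ[R] B) (b : B) (y : P1) :
    (rel d1 f).mkQ (b, d1 y) = (rel d1 f).mkQ (b + f y, 0) := by
  rw [← sub_eq_zero, ← map_sub, Submodule.mkQ_apply, Submodule.Quotient.mk_eq_zero,
    Prod.mk_sub_mk, mem_rel]
  exact ⟨-y, by simp, by simp⟩

/-- The standard extension attached to a cocycle and a form. -/
def std (h10 : ∀ y, q (d1 y) = 0) (hq : Function.Surjective q)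
    (e0 : ∀ x, q x = 0 → ∃ y, d1 y = x) (e1 : ∀ y, d1 y = 0 → ∃ z, d2 z = y)
    (w : A [⋀^Fin 2]→ₗ[R] B) (f : P1 →ₗ[R] B) (hf : ∀ z, f (d2 z) = 0) :
    LieCentralExtension R A B :=
  mkLie (iotaMap d1 f) (piMap d1 q h10 f)
    (by
      rw [injective_iff_map_eq_zero]
      intro b hb
      have hb' : (b, (0 : P0)) ∈ rel d1 f := by
        rw [← Submodule.Quotient.mk_eq_zero]; exact hb
      obtain ⟨y, rfl, hy⟩ := (mem_rel _ _ _ _).1 hb'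
      obtain ⟨z, rfl⟩ := e1 y (by simpa using hy)
      exact hf z)
    (by
      intro a
      obtain ⟨x, rfl⟩ := hq a
      exact ⟨(rel d1 f).mkQ (0, x), by simp [piMap]⟩)
    (by
      apply le_antisymm
      · rintro _ ⟨b, rfl⟩
        simp [piMap, iotaMap]
      · intro e he
        obtain ⟨⟨b, x⟩, rfl⟩ := (rel d1 f).mkQ_surjective e
        obtain ⟨y, rfl⟩ := e0 x (by simpa [piMap] using he)
        rw [mk_d]
        exact ⟨_, rfl⟩) w

variable (h10 : ∀ y, q (d1 y) = 0) (hq : Function.Surjective q)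
  (e0 : ∀ x, q x = 0 → ∃ y, d1 y = x) (e1 : ∀ y, d1 y = 0 → ∃ z, d2 z = y)

theorem std_equivalent (w : A [⋀^Fin 2]→ₗ[R] B) (f : P1 →ₗ[R] B) (hf : ∀ z, f (d2 z) = 0)
    (X : LieCentralExtension R A B) (hw : ∀ e e' : X.E, ⁅e, e'⁆ = X.ι (w ![X.π e, X.π e']))
    (l : P0 →ₗ[R] X.E) (hl : ∀ x, X.π (l x) = q x) (hlf : ∀ y, X.ι (f y) = l (d1 y)) :
    (std d2 d1 q h10 hq e0 e1 w f hf).Equivalent X := by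
  let φ : ((B × P0) ⧸ rel d1 f) →ₗ[R] X.E := (rel d1 f).liftQ (X.ι.coprod l) (by
    rintro _ ⟨y, rfl⟩
    simp [hlf])
  have hι : ∀ b, φ (iotaMap d1 f b) = X.ι b := by
    intro b; simp [φ, iotaMap]
  have hπ : ∀ e, X.π (φ e) = piMap d1 q h10 f e := by
    intro e
    obtain ⟨⟨b, x⟩, rfl⟩ := (rel d1 f).mkQ_surjective e
    simp [φ, piMap, pi_iota, hl]
  refine equivalent_of_map (std d2 d1 q h10 hq e0 e1 w f hf) X φ ?_ hι hπ
  intro e e'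
  refine Eq.trans (hι _) (Eq.trans ?_ (hw _ _).symm)
  exact congrArg X.ι (congrArg₂ (fun a a' => w ![a, a']) (hπ e).symm (hπ e').symm)

theorem exists_std (h21 : ∀ z, d1 (d2 z) = 0) [Module.Projective R P0]
    (X : LieCentralExtension R A B) :
    ∃ w f hf, (std d2 d1 q h10 hq e0 e1 w f hf).Equivalent X := by
  obtain ⟨w, hw⟩ := exists_form X
  obtain ⟨l, hl⟩ := Module.projective_lifting_property X.π q X.surj
  have hl' : ∀ x, X.π (l x) = q x := fun x => LinearMap.congr_fun hl x
  obtain ⟨f, hf⟩ := factor X (l ∘ₗ d1) (fun y => by simp [hl', h10])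
  have hf0 : ∀ z, f (d2 z) = 0 := fun z => X.inj (by rw [hf]; simp [h21])
  exact ⟨w, f, hf0, std_equivalent d2 d1 q h10 hq e0 e1 w f hf0 X hw l hl' hf⟩

theorem std_equivalent_std (w : A [⋀^Fin 2]→ₗ[R] B) (f f' : P1 →ₗ[R] B)
    (hf : ∀ z, f (d2 z) = 0) (hf' : ∀ z, f' (d2 z) = 0) (h : P0 →ₗ[R] B)
    (hh : ∀ y, h (d1 y) = f y - f' y) :
    (std d2 d1 q h10 hq e0 e1 w f hf).Equivalent (std d2 d1 q h10 hq e0 e1 w f' hf') := by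
  refine std_equivalent d2 d1 q h10 hq e0 e1 w f hf _ (fun _ _ => rfl)
    ((rel d1 f').mkQ ∘ₗ (h.prod LinearMap.id)) ?_ ?_
  · intro x
    change piMap d1 q h10 f' ((rel d1 f').mkQ (h x, x)) = q x
    simp [piMap]
  · intro y
    change (rel d1 f').mkQ (f y, 0) = (rel d1 f').mkQ (h (d1 y), d1 y)
    rw [mk_d, hh, sub_add_cancel]

theorem eq_of_std_equivalent (w w' : A [⋀^Fin 2]→ₗ[R] B) (f f' : P1 →ₗ[R] B)
    (hf : ∀ z, f (d2 z) = 0) (hf' : ∀ z, f' (d2 z) = 0)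
    (H : (std d2 d1 q h10 hq e0 e1 w f hf).Equivalent (std d2 d1 q h10 hq e0 e1 w' f' hf')) :
    w = w' ∧ ∃ h : P0 →ₗ[R] B, ∀ y, h (d1 y) = f y - f' y := by
  obtain ⟨φ, h1, h2, h3⟩ := H
  constructor
  · apply alt_ext
    intro a a'
    obtain ⟨e, rfl⟩ := (std d2 d1 q h10 hq e0 e1 w f hf).surj a
    obtain ⟨e', rfl⟩ := (std d2 d1 q h10 hq e0 e1 w f hf).surj a'
    apply (std d2 d1 q h10 hq e0 e1 w' f' hf').inj
    refine (h2 _).symm.trans ((h1 e e').trans ?_)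
    exact congrArg (std d2 d1 q h10 hq e0 e1 w' f' hf').ι
      (congrArg₂ (fun a a' => w' ![a, a']) (h3 e) (h3 e'))
  · let ψ : ((B × P0) ⧸ rel d1 f) →ₗ[R] ((B × P0) ⧸ rel d1 f') := φ.toLinearMap
    have hψι : ∀ b, ψ ((rel d1 f).mkQ (b, 0)) = (rel d1 f').mkQ (b, 0) := h2
    have hψπ : ∀ e, piMap d1 q h10 f' (ψ e) = piMap d1 q h10 f e := h3
    let g : P0 →ₗ[R] ((B × P0) ⧸ rel d1 f') :=
      ψ ∘ₗ (rel d1 f).mkQ ∘ₗ LinearMap.inr R B P0 - (rel d1 f').mkQ ∘ₗ LinearMap.inr R B P0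
    have hg : ∀ x, piMap d1 q h10 f' (g x) = 0 := by
      intro x
      simp only [g, LinearMap.sub_apply, map_sub, LinearMap.comp_apply, hψπ]
      simp [piMap]
    obtain ⟨h, hh⟩ := factor (std d2 d1 q h10 hq e0 e1 w' f' hf') g hg
    have hh' : ∀ x, (rel d1 f').mkQ (h x, 0) =
      ψ ((rel d1 f).mkQ (0, x)) - (rel d1 f').mkQ (0, x) := hh
    refine ⟨h, fun y => (std d2 d1 q h10 hq e0 e1 w' f' hf').inj ?_⟩
    change (rel d1 f').mkQ (h (d1 y), 0) = (rel d1 f').mkQ (f y - f' y, 0)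
    rw [hh', mk_d, mk_d, hψι, ← map_sub]
    simp

/-- The classification, for any description `Φ` of the first cohomology. -/
theorem classify (h10 : ∀ y, q (d1 y) = 0) (hq : Function.Surjective q)
    (e0 : ∀ x, q x = 0 → ∃ y, d1 y = x) (e1 : ∀ y, d1 y = 0 → ∃ z, d2 z = y) (h21 : ∀ z, d1 (d2 z) = 0) [Module.Projective R P0] {T : Type}
    (Φ : {f : P1 →ₗ[R] B // ∀ z, f (d2 z) = 0} → T) (hΦ : Function.Surjective Φ)
    (hΦ' : ∀ f f', Φ f = Φ f' ↔ ∃ h : P0 →ₗ[R] B, ∀ y, h (d1 y) = f.1 y - f'.1 y) :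
    Nonempty (Quot (LieCentralExtension.Equivalent (R := R) (A := A) (B := B)) ≃
      ((⋀[R]^2 A) →ₗ[R] B) × T) := by
  let F : (A [⋀^Fin 2]→ₗ[R] B) × T → Quot (LieCentralExtension.Equivalent (R := R) (A := A) (B := B)) :=
    fun x => Quot.mk _ (std d2 d1 q h10 hq e0 e1 x.1 (Function.surjInv hΦ x.2).1
      (Function.surjInv hΦ x.2).2)
  have hF : Function.Bijective F := by
    constructor
    · rintro ⟨w, t⟩ ⟨w', t'⟩ h
      have h' := (equivalence.quot_mk_eq_iff _ _).1 h
      obtain ⟨rfl, hh⟩ := eq_of_std_equivalent d2 d1 q h10 hq e0 e1 _ _ _ _ _ _ h'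
      have := (hΦ' _ _).2 hh
      rw [Function.surjInv_eq hΦ, Function.surjInv_eq hΦ] at this
      simp only at this
      rw [this]
    · intro X
      induction X using Quot.ind with
      | mk X =>
        obtain ⟨w, f, hf, H⟩ := exists_std d2 d1 q h10 hq e0 e1 h21 X
        refine ⟨(w, Φ ⟨f, hf⟩), ?_⟩
        refine (Quot.sound ?_).trans (Quot.sound H)
        obtain ⟨h, hh⟩ := (hΦ' (Function.surjInv hΦ (Φ ⟨f, hf⟩)) ⟨f, hf⟩).1
          (Function.surjInv_eq hΦ _)
        exact std_equivalent_std d2 d1 q h10 hq e0 e1 w _ f _ hf h hh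
  exact ⟨(Equiv.ofBijective F hF).symm.trans
    (Equiv.prodCongr exteriorPower.alternatingMapLinearEquiv.toEquiv (Equiv.refl T))⟩

end Abstract

section ExtPart

theorem homology_desc {R : Type} [CommRing R] (S : ShortComplex (ModuleCat.{0} R)) :
    ∃ Φ : {x : S.X₂ // S.g x = 0} → S.homology, Function.Surjective Φ ∧
      ∀ x y, Φ x = Φ y ↔ ∃ z, S.f z = x.1 - y.1 := by
  let e := S.moduleCatHomologyIso.toLinearEquiv
  refine ⟨fun x => e.symm (Submodule.Quotient.mk ⟨x.1, x.2⟩), ?_, ?_⟩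
  · intro t
    obtain ⟨t, rfl⟩ := e.symm.surjective t
    obtain ⟨x, rfl⟩ := Submodule.Quotient.mk_surjective _ t
    exact ⟨⟨x.1, x.2⟩, rfl⟩
  · intro x y
    refine e.symm.injective.eq_iff.trans ((Submodule.Quotient.eq _).trans ?_)
    constructor
    · rintro ⟨z, hz⟩
      exact ⟨z, congrArg Subtype.val hz⟩
    · rintro ⟨z, hz⟩
      exact ⟨z, Subtype.ext hz⟩

theorem ext_desc {R : Type} [CommRing R] {X : ModuleCat.{0} R} (P : ProjectiveResolution X)
    (Y : ModuleCat.{0} R) :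
    ∃ Φ : {f : P.complex.X 1 →ₗ[R] Y // ∀ z, f ((P.complex.d 2 1).hom z) = 0} →
        ((Ext R (ModuleCat.{0} R) 1).obj (op X)).obj Y, Function.Surjective Φ ∧
      ∀ f f', Φ f = Φ f' ↔ ∃ h : P.complex.X 0 →ₗ[R] Y,
        ∀ y, h ((P.complex.d 1 0).hom y) = f.1 y - f'.1 y := by
  let K := P.complex.linearYonedaObj R Y
  let S := K.sc' 0 1 2
  let e : ((Ext R (ModuleCat.{0} R) 1).obj (op X)).obj Y ≅ S.homology :=
    P.isoExt 1 Y ≪≫ ShortComplex.homologyMapIso (K.isoSc' 0 1 2 (by simp) (by simp))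
  obtain ⟨Φ, h1, h2⟩ := homology_desc S
  have hg : ∀ f : P.complex.X 1 ⟶ Y, S.g f = P.complex.d 2 1 ≫ f := fun f => rfl
  have hf : ∀ f : P.complex.X 0 ⟶ Y, S.f f = P.complex.d 1 0 ≫ f := fun f => rfl
  let c : {f : P.complex.X 1 →ₗ[R] Y // ∀ z, f ((P.complex.d 2 1).hom z) = 0} →
      {x : S.X₂ // S.g x = 0} := fun f => ⟨ModuleCat.ofHom f.1, by
        refine (hg _).trans (ModuleCat.hom_ext (LinearMap.ext fun z => ?_))
        exact f.2 z⟩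
  refine ⟨fun f => e.toLinearEquiv.symm (Φ (c f)), ?_, ?_⟩
  · refine e.toLinearEquiv.symm.surjective.comp (h1.comp ?_)
    rintro ⟨(x : P.complex.X 1 ⟶ Y), hx⟩
    refine ⟨⟨x.hom, fun z => ?_⟩, rfl⟩
    rw [hg] at hx
    exact LinearMap.congr_fun (congrArg ModuleCat.Hom.hom hx) z
  · intro f f'
    rw [e.toLinearEquiv.symm.injective.eq_iff, h2]
    constructor
    · rintro ⟨(z : P.complex.X 0 ⟶ Y), hz⟩
      rw [hf] at hz
      exact ⟨z.hom, fun y => LinearMap.congr_fun (congrArg ModuleCat.Hom.hom hz) y⟩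
    · rintro ⟨h, hh⟩
      refine ⟨(ModuleCat.ofHom h : P.complex.X 0 ⟶ Y), ?_⟩
      rw [hf]
      apply ModuleCat.hom_ext
      ext y
      exact hh y

end ExtPart

end CentralExt

/-- Let `A` and `B` be finite abelian `p`-groups regarded as abelian Lie rings over
`ℤ_p`.  The set of equivalence classes of central extensions `0 → B → E → A → 0` of
`ℤ_p`-Lie rings is in bijection with `Hom(⋀²A, B) × Ext¹_{ℤ_p}(A, B)`. -/
theorem central_extensions_classification (p : ℕ) [Fact p.Prime]
    (A B : Type) [AddCommGroup A] [Module (PadicInt p) A] [Finite A]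
    [AddCommGroup B] [Module (PadicInt p) B] [Finite B] :
    Nonempty (Quot (LieCentralExtension.Equivalent (R := PadicInt p) (A := A) (B := B)) ≃
      (((⋀[PadicInt p]^2 A) →ₗ[PadicInt p] B) × ext1 (PadicInt p) A B)) := by
  let P := projectiveResolution (ModuleCat.of (PadicInt p) A)
  obtain ⟨Φ, h1, h2⟩ := CentralExt.ext_desc P (ModuleCat.of (PadicInt p) B)
  have hproj : Module.Projective (PadicInt p) (P.complex.X 0) :=
    (IsProjective.iff_projective _).2 (P.projective 0)
  let q : P.complex.X 0 →ₗ[PadicInt p] A := (P.π.f 0).hom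
  have hq : Function.Surjective q :=
    (ModuleCat.epi_iff_surjective (P.π.f 0)).1 inferInstance
  have x0 := (ShortComplex.moduleCat_exact_iff _).1 P.exact₀
  have x1 := (ShortComplex.moduleCat_exact_iff _).1 (P.exact_succ 0)
  have h10 : ∀ y, q ((P.complex.d 1 0).hom y) = 0 :=
    fun y => LinearMap.congr_fun (congrArg ModuleCat.Hom.hom P.complex_d_comp_π_f_zero) y
  have h21 : ∀ z, (P.complex.d 1 0).hom ((P.complex.d 2 1).hom z) = 0 :=
    fun z => LinearMap.congr_fun (congrArg ModuleCat.Hom.hom (P.complex.d_comp_d 2 1 0)) z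
  exact CentralExt.classify (P.complex.d 2 1).hom (P.complex.d 1 0).hom q h10 hq x0 x1 h21 Φ h1 h2
end
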